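/- Let F be a geodesic line foliation of a complete Riemannian plane M. Let σ₁ and σ₃ be two leaves of F, let p be an interior point of the strip S_{σ₁}^{σ₃}, and let σ₂ be the leaf of F passing through p. Then σ₂ separates the strip: S_{σ₁}^{σ₂} ∩ S_{σ₂}^{σ₃} = σ₂ and S_{σ₁}^{σ₃} = S_{σ₁}^{σ₂} ∪ S_{σ₂}^{σ₃}. -/

import Mathlib

open Set Filter MeasureTheory Metric
open scoped ENNReal NNReal Topology

/-- A (geodesic) line in a metric space: a map `γ : ℝ → X` with
`d(γ s, γ t) = |s - t|` for all `s, t`, i.e. an isometric embedding of `ℝ`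
(in a Riemannian manifold such a curve is automatically a geodesic that
minimizes the distance between any two of its points). -/
def IsLine {X : Type} [MetricSpace X] (γ : ℝ → X) : Prop :=
  ∀ s t : ℝ, dist (γ s) (γ t) = |s - t|

/-- A (geodesic) ray: a map `γ : ℝ → X` with `d(γ s, γ t) = |s - t|`
for all `s, t ≥ 0`, i.e. an isometric embedding of `[0, ∞)`. -/
def IsRay {X : Type} [MetricSpace X] (γ : ℝ → X) : Prop :=
  ∀ s t : ℝ, 0 ≤ s → 0 ≤ t → dist (γ s) (γ t) = |s - t|

/-- A minimizing (unit-speed) geodesic segment defined on `[a, b]`. -/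
def IsMinimizingSegment {X : Type} [MetricSpace X] (σ : ℝ → X) (a b : ℝ) : Prop :=
  ∀ s ∈ Set.Icc a b, ∀ t ∈ Set.Icc a b, dist (σ s) (σ t) = |s - t|

/-- Two rays are asymptotes if they stay within bounded distance of each other. -/
def Asymptotic {X : Type} [MetricSpace X] (γ σ : ℝ → X) : Prop :=
  ∃ C : ℝ, 0 < C ∧ ∀ t : ℝ, 0 ≤ t → dist (γ t) (σ t) ≤ C

/-- A set is geodesically convex if every minimizing geodesic segment
between two of its points is contained in it. -/
def GeodesicallyConvex {X : Type} [MetricSpace X] (A : Set X) : Prop :=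
  ∀ (σ : ℝ → X) (a b : ℝ), a ≤ b → IsMinimizingSegment σ a b →
    σ a ∈ A → σ b ∈ A → ∀ t ∈ Set.Icc a b, σ t ∈ A

/-- Abstract packaging of a complete Riemannian surface: the underlying metric
space of the Riemannian metric, together with its geodesics, its Gaussian
curvature, its Riemannian area measure, the Riemannian angle, and the
(differential-geometric, hence here abstractly recorded) property of having
no conjugate points. -/
structure RiemannianSurface where
  /-- the underlying set of points -/
  M : Type
  /-- the distance function induced by the Riemannian metric -/
  [metric : MetricSpace M]
  [mble : MeasurableSpace M]
  borel : BorelSpace M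
  /-- the Riemannian metric is complete -/
  complete : CompleteSpace M
  /-- the complete unit-speed geodesics of the Riemannian metric -/
  IsGeodesic : (ℝ → M) → Prop
  /-- the unit-speed geodesic segments `σ : [a, b] → M` of the Riemannian metric -/
  IsGeodesicSegment : (ℝ → M) → ℝ → ℝ → Prop
  /-- a metric line is a (complete, globally minimizing) geodesic -/
  line_isGeodesic : ∀ γ : ℝ → M, IsLine γ → IsGeodesic γ
  /-- the restriction of a complete geodesic to an interval is a geodesic segment -/
  geodesic_isGeodesicSegment : ∀ (γ : ℝ → M) (a b : ℝ), IsGeodesic γ → IsGeodesicSegment γ a b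
  /-- a minimizing segment is a geodesic segment -/
  minimizing_isGeodesicSegment : ∀ (σ : ℝ → M) (a b : ℝ),
    IsMinimizingSegment σ a b → IsGeodesicSegment σ a b
  /-- the Gaussian curvature -/
  K : M → ℝ
  /-- the Riemannian area measure -/
  area : MeasureTheory.Measure M
  /-- `angle p x y` is the angle `∠ₚ(x, y)` at `p` subtended by `x` and `y`
  (the angle at `p` between the initial directions of minimizing geodesics
  from `p` to `x` and to `y`) -/
  angle : M → M → M → ℝ
  /-- the Riemannian metric has no conjugate points: no geodesic contains a pair
  of mutually conjugate points -/
  NoConjugatePoints : Prop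

attribute [instance] RiemannianSurface.metric RiemannianSurface.mble

namespace RiemannianSurface

variable (S : RiemannianSurface)

/-- the total positive curvature `c₊(M) = ∫_M K⁺ dμ`, as an extended nonnegative real -/
noncomputable def cPlus : ℝ≥0∞ := ∫⁻ x, ENNReal.ofReal (S.K x) ∂S.area

/-- `∫_M (-K⁻) dμ = -c₋(M)`, the absolute value of the total negative curvature,
as an extended nonnegative real -/
noncomputable def cMinus : ℝ≥0∞ := ∫⁻ x, ENNReal.ofReal (-S.K x) ∂S.area

/-- `M` admits total curvature if at least one of `c₊(M)`, `c₋(M)` is finite -/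
def AdmitsTotalCurvature : Prop := S.cPlus ≠ ⊤ ∨ S.cMinus ≠ ⊤

/-- the total curvature `c(M) = c₊(M) + c₋(M) = ∫_M K dμ`, as an extended real -/
noncomputable def totalCurvature : EReal := (S.cPlus : EReal) - (S.cMinus : EReal)

/-- the total curvature `c(A) = ∫_A K dμ` of a region `A ⊆ M`, as an extended real -/
noncomputable def cOn (A : Set S.M) : EReal :=
  ((∫⁻ x in A, ENNReal.ofReal (S.K x) ∂S.area : ℝ≥0∞) : EReal) -
    ((∫⁻ x in A, ENNReal.ofReal (-S.K x) ∂S.area : ℝ≥0∞) : EReal)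

/-- `M` satisfies the visibility axiom at `p`: for every `ε > 0` there is `R > 0`
such that every geodesic segment staying at distance `> R` from `p` subtends an
angle at most `ε` at `p`. -/
def VisibilityAt (p : S.M) : Prop :=
  ∀ ε : ℝ, 0 < ε → ∃ R : ℝ, 0 < R ∧
    ∀ (σ : ℝ → S.M) (a b : ℝ), a ≤ b → S.IsGeodesicSegment σ a b →
      (∀ t ∈ Set.Icc a b, R < dist p (σ t)) → S.angle p (σ a) (σ b) ≤ ε

end RiemannianSurface

/-- A foliation of the surface all of whose leaves are geodesic lines:
a partition of `M` into leaves, each of which is the image of a geodesic line,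
which is locally trivial (each point has a foliated chart whose plaques lie
in the leaves). -/
structure GeodesicLineFoliation (S : RiemannianSurface) where
  /-- the leaves of the foliation -/
  leaves : Set (Set S.M)
  covers : ∀ x : S.M, ∃ L ∈ leaves, x ∈ L
  eq_of_inter : ∀ L₁ ∈ leaves, ∀ L₂ ∈ leaves, (L₁ ∩ L₂).Nonempty → L₁ = L₂
  /-- every leaf is a geodesic line -/
  leaf_is_geodesic_line : ∀ L ∈ leaves,
    ∃ γ : ℝ → S.M, IsLine γ ∧ S.IsGeodesic γ ∧ Set.range γ = L
  /-- local triviality: foliated charts whose plaques lie in leaves -/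
  locally_trivial : ∀ x : S.M, ∃ U : Set S.M, IsOpen U ∧ x ∈ U ∧
    ∃ φ : ↥U ≃ₜ (ℝ × ℝ), ∀ c : ℝ, ∃ L ∈ leaves, ∀ t : ℝ, (φ.symm (t, c)).1 ∈ L

/-- any two leaves of the foliation are at finite Hausdorff distance from each other -/
def GeodesicLineFoliation.BoundedHausdorffDistance {S : RiemannianSurface}
    (F : GeodesicLineFoliation S) : Prop :=
  ∀ L₁ ∈ F.leaves, ∀ L₂ ∈ F.leaves, EMetric.hausdorffEdist L₁ L₂ ≠ ⊤

/-- The closed half-plane bounded by (the image of) a line `σ` and containing the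
set `L` (disjoint from `σ`): the closure of the union of the connected components
of the complement of `σ` meeting `L`. -/
def halfPlaneOf {X : Type} [MetricSpace X] (σ L : Set X) : Set X :=
  closure (⋃ x ∈ L, connectedComponentIn σᶜ x)

/-- The strip `S_γ^σ` bounded by two disjoint lines `σ` and `γ`: the intersection of
the closed half-plane bounded by `σ` containing `γ` with the closed half-plane
bounded by `γ` containing `σ`. -/
def stripBetween {X : Type} [MetricSpace X] (σ γ : Set X) : Set X :=
  halfPlaneOf σ γ ∩ halfPlaneOf γ σ

/-!
Let `Q` be the space of leaves and `π : M → Q` the projection. Leaves of a foliation by lines cannot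
accumulate on each other inside a small ball: between two plaques of the same leaf the distance
along the leaf would be the distance in `M`, too short to leave the chart. So `π` is open with
connected fibres and `Q` is a one-dimensional manifold. It is Hausdorff, because triples of points
on a common leaf form degenerate triangles, a closed condition, and a point forming degenerate
triangles with all pairs of points of a line lies on that line.

Every point `q` of `Q` is a cut point: collapsing the complement of a chart at `q` gives a map from
`Q` to the circle, whose composition with `π` lifts to `ℝ` since `M` is simply connected, and the
sign of the lift separates the two sides of `q`.

Half-planes and strips in `M` are the preimages of the analogous subsets of `Q`, where the theorem
becomes a statement about one point separating two others.
-/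

open Topology

theorem exists_isOpenEmbedding_range_eq_ball {E : Type*} [NormedAddCommGroup E] [NormedSpace ℝ E]
    (c : E) {δ : ℝ} (hδ : 0 < δ) :
    ∃ u : E → E, IsOpenEmbedding u ∧ u 0 = c ∧ range u = ball c δ := by
  refine ⟨OpenPartialHomeomorph.univBall c δ, ?_, OpenPartialHomeomorph.univBall_apply_zero c δ, ?_⟩
  · exact OpenPartialHomeomorph.isOpenEmbedding _ (OpenPartialHomeomorph.univBall_source c δ)
  · rw [← OpenPartialHomeomorph.univBall_target c hδ,
      ← OpenPartialHomeomorph.image_source_eq_target,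
      OpenPartialHomeomorph.univBall_source, image_univ]

theorem exists_isOpenEmbedding_range_subset (E : Type*) [NormedAddCommGroup E] [NormedSpace ℝ E]
    {Q : Type*} [TopologicalSpace Q] [ChartedSpace E Q] {q : Q} {N : Set Q} (hN : N ∈ 𝓝 q) :
    ∃ e : E → Q, IsOpenEmbedding e ∧ e 0 = q ∧ range e ⊆ N := by
  set φ := (chartAt E q).symm
  have hq : chartAt E q q ∈ φ.source := mem_chart_target E q
  have hφq : φ (chartAt E q q) = q := (chartAt E q).left_inv (mem_chart_source E q)
  have hmem : φ.source ∩ φ ⁻¹' N ∈ 𝓝 (chartAt E q q) :=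
    inter_mem (φ.open_source.mem_nhds hq)
      ((φ.continuousAt hq).preimage_mem_nhds (by rwa [hφq]))
  obtain ⟨δ, hδ, hball⟩ := Metric.mem_nhds_iff.mp hmem
  obtain ⟨u, hu, hu₀, hrange⟩ := exists_isOpenEmbedding_range_eq_ball (chartAt E q q) hδ
  have hmaps : ∀ t, u t ∈ φ.source ∩ φ ⁻¹' N := fun t ↦ hball (hrange ▸ mem_range_self t)
  refine ⟨φ ∘ u, ?_, by simp [hu₀, hφq], range_subset_iff.mpr fun t ↦ (hmaps t).2⟩
  have hsrc : (hu.toOpenPartialHomeomorph u |>.trans φ).source = univ := by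
    ext t; simp [(hmaps t).1]
  exact OpenPartialHomeomorph.isOpenEmbedding _ hsrc

/-- The manifold structure on a space covered by open embeddings of the model space: the charts are
their inverses. -/
noncomputable abbrev chartedSpaceOfIsOpenEmbedding {H Q : Type*} [TopologicalSpace H] [Nonempty H]
    [TopologicalSpace Q] (h : ∀ q : Q, ∃ e : H → Q, IsOpenEmbedding e ∧ q ∈ range e) :
    ChartedSpace H Q where
  atlas := range fun q ↦ ((h q).choose_spec.1.toOpenPartialHomeomorph _).symm
  chartAt q := ((h q).choose_spec.1.toOpenPartialHomeomorph _).symm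
  mem_chart_source q := by simpa using (h q).choose_spec.2
  chart_mem_atlas q := mem_range_self q

/-! ### Cut points -/

section CutPoints

variable {Q : Type*} [TopologicalSpace Q]

/-- The point `x` separates `a` from `b`: they lie in different components of `{x}ᶜ`. -/
def Separates (x a b : Q) : Prop :=
  a ≠ x ∧ b ≠ x ∧ b ∉ connectedComponentIn {x}ᶜ a

/-- A splitting of the complement of `x` into two disjoint open sets, one of them possibly empty. -/
structure IsCut (x : Q) (U V : Set Q) : Prop where
  isOpen_left : IsOpen U
  isOpen_right : IsOpen V
  disjoint : Disjoint U V
  union_eq : U ∪ V = {x}ᶜ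

/-- The closed side of `a` containing `b`: the half-plane `halfPlaneOf`, for points in place of
lines. -/
def closedSide (a b : Q) : Set Q :=
  closure (connectedComponentIn {a}ᶜ b)

/-- The points between `a` and `b`: the analogue of `stripBetween`, for points in place of lines. -/
def cutSegment (a b : Q) : Set Q :=
  closedSide a b ∩ closedSide b a

/-- A point whose complement is disconnected. -/
def IsCutPoint (x : Q) : Prop :=
  ∃ a b, Separates x a b

theorem Separates.symm {x a b : Q} (h : Separates x a b) : Separates x b a :=
  ⟨h.2.1, h.1, fun hab ↦ h.2.2 <| by
    rw [← connectedComponentIn_eq hab]; exact mem_connectedComponentIn h.2.1⟩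

theorem Separates.disjoint {x a b : Q} (h : Separates x a b) :
    Disjoint (connectedComponentIn {x}ᶜ a) (connectedComponentIn {x}ᶜ b) := by
  refine disjoint_left.mpr fun y hya hyb ↦ h.2.2 ?_
  rw [connectedComponentIn_eq hya, ← connectedComponentIn_eq hyb]
  exact mem_connectedComponentIn h.2.1

theorem IsCutPoint.exists_separates {x a : Q} (hx : IsCutPoint x) (ha : a ≠ x) :
    ∃ b, Separates x a b := by
  obtain ⟨u, v, huv⟩ := hx
  by_cases hu : u ∈ connectedComponentIn {x}ᶜ a
  · refine ⟨v, ha, huv.2.1, ?_⟩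
    rw [connectedComponentIn_eq hu]
    exact huv.2.2
  · exact ⟨u, ha, huv.1, hu⟩

namespace IsCut

variable {x a b : Q} {U V : Set Q}

protected theorem symm (h : IsCut x U V) : IsCut x V U :=
  ⟨h.isOpen_right, h.isOpen_left, h.disjoint.symm, by rw [union_comm, h.union_eq]⟩

theorem subset_or_subset (h : IsCut x U V) {s : Set Q} (hs : IsPreconnected s) (hx : x ∉ s) :
    s ⊆ U ∨ s ⊆ V :=
  hs.subset_or_subset h.isOpen_left h.isOpen_right h.disjoint <| by
    rw [h.union_eq]; exact subset_compl_singleton_iff.mpr hx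

theorem ne_left (h : IsCut x U V) (ha : a ∈ U) : a ≠ x := by
  have : a ∈ U ∪ V := Or.inl ha
  rwa [h.union_eq] at this

theorem separates (h : IsCut x U V) (ha : a ∈ U) (hb : b ∈ V) : Separates x a b := by
  have hax : a ≠ x := h.ne_left ha
  refine ⟨hax, h.symm.ne_left hb, fun hab ↦ ?_⟩
  have haC : a ∈ connectedComponentIn {x}ᶜ a := mem_connectedComponentIn hax
  rcases h.subset_or_subset (s := connectedComponentIn {x}ᶜ a) isPreconnected_connectedComponentIn
    (fun hx ↦ connectedComponentIn_subset _ _ hx rfl) with hU | hV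
  · exact h.disjoint.notMem_of_mem_left (hU hab) hb
  · exact h.disjoint.notMem_of_mem_left ha (hV haC)

end IsCut

theorem isPreconnected_closedSide {a b : Q} : IsPreconnected (closedSide a b) :=
  isPreconnected_connectedComponentIn.closure

section LocallyConnected

variable [LocallyConnectedSpace Q] [T1Space Q] {x a b : Q}

theorem isOpen_connectedComponentIn_compl_singleton :
    IsOpen (connectedComponentIn {x}ᶜ a) :=
  isOpen_compl_singleton.connectedComponentIn

theorem isCut_connectedComponentIn (ha : a ≠ x) :
    IsCut x (connectedComponentIn {x}ᶜ a) ({x}ᶜ \ connectedComponentIn {x}ᶜ a) where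
  isOpen_left := isOpen_connectedComponentIn_compl_singleton
  isOpen_right := by
    refine isOpen_iff_mem_nhds.mpr fun y hy ↦ mem_of_superset
      (isOpen_connectedComponentIn_compl_singleton.mem_nhds (mem_connectedComponentIn hy.1))
      fun z hz ↦ ⟨connectedComponentIn_subset _ _ hz, ?_⟩
    exact (Separates.disjoint ⟨ha, hy.1, hy.2⟩).notMem_of_mem_right hz
  disjoint := disjoint_sdiff_right
  union_eq := union_sdiff_cancel (connectedComponentIn_subset _ _)

theorem closure_connectedComponentIn_compl_singleton [PreconnectedSpace Q] (ha : a ≠ x) :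
    closure (connectedComponentIn {x}ᶜ a) = insert x (connectedComponentIn {x}ᶜ a) := by
  set C := connectedComponentIn {x}ᶜ a
  have hcut : IsCut x C ({x}ᶜ \ C) := isCut_connectedComponentIn ha
  have hsub : closure C ⊆ insert x C := by
    have hcompl : insert x C = ({x}ᶜ \ C)ᶜ := by ext y; by_cases hy : y = x <;> simp [hy]
    refine closure_minimal (subset_insert x C) ?_
    rw [hcompl]
    exact hcut.isOpen_right.isClosed_compl
  refine hsub.antisymm (insert_subset ?_ subset_closure)
  by_contra hx
  have hclosed : IsClosed C := closure_subset_iff_isClosed.mp fun y hy ↦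
    (hsub hy).resolve_left fun hyx ↦ hx (hyx ▸ hy)
  have huniv : C = univ :=
    IsClopen.eq_univ ⟨hclosed, hcut.isOpen_left⟩ ⟨a, mem_connectedComponentIn ha⟩
  exact hcut.ne_left (huniv ▸ mem_univ x : x ∈ C) rfl

theorem closedSide_eq_insert [PreconnectedSpace Q] (hb : b ≠ a) :
    closedSide a b = insert a (connectedComponentIn {a}ᶜ b) :=
  closure_connectedComponentIn_compl_singleton hb

theorem IsCutPoint.notMem_interior_closedSide [PreconnectedSpace Q] (ha : IsCutPoint a)
    (hb : b ≠ a) : a ∉ interior (closedSide a b) := by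
  obtain ⟨y, hy⟩ := ha.exists_separates hb
  intro hmem
  have hclosure : a ∈ closure (connectedComponentIn {a}ᶜ y) := by
    rw [closure_connectedComponentIn_compl_singleton hy.2.1]; exact mem_insert a _
  obtain ⟨z, hz, hzy⟩ := mem_closure_iff.mp hclosure _ isOpen_interior hmem
  have hzb := interior_subset hz
  rw [closedSide_eq_insert hb] at hzb
  rcases hzb with rfl | hzb
  · exact connectedComponentIn_subset _ _ hzy rfl
  · exact hy.disjoint.notMem_of_mem_left hzb hzy

namespace Separates

variable [PreconnectedSpace Q] {p : Q}

theorem closedSide_subset (h : Separates p a b) :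
    closedSide p a ⊆ connectedComponentIn {b}ᶜ a := by
  have ha : a ∈ closedSide p a := subset_closure (mem_connectedComponentIn h.1)
  refine isPreconnected_closedSide.subset_connectedComponentIn ha ?_
  rw [closedSide_eq_insert h.1, subset_compl_singleton_iff]
  rintro (hbp | hb)
  exacts [h.2.1 hbp, h.2.2 hb]

theorem closedSide_eq (h : Separates p a b) : closedSide b p = closedSide b a := by
  have hp : p ∈ closedSide p a := by rw [closedSide_eq_insert h.1]; exact mem_insert p _
  simp only [closedSide, connectedComponentIn_eq (h.closedSide_subset hp)]

theorem closedSide_inter (h : Separates p a b) : closedSide p a ∩ closedSide p b = {p} := by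
  rw [closedSide_eq_insert h.1, closedSide_eq_insert h.2.1, ← insert_inter_distrib,
    h.disjoint.inter_eq, insert_empty_eq]

theorem mem_cutSegment_right (h : Separates p a b) : p ∈ cutSegment a p := by
  refine ⟨subset_closure (mem_connectedComponentIn h.1.symm), ?_⟩
  rw [closedSide_eq_insert h.1]
  exact mem_insert p _

theorem cutSegment_right (h : Separates p a b) :
    cutSegment a p = closedSide a b ∩ closedSide p a := by
  rw [cutSegment, h.symm.closedSide_eq]

theorem cutSegment_left (h : Separates p a b) :
    cutSegment p b = closedSide p b ∩ closedSide b a := by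
  rw [cutSegment, h.closedSide_eq]

theorem cutSegment_inter (h : Separates p a b) : cutSegment a p ∩ cutSegment p b = {p} := by
  refine Subset.antisymm ?_ (singleton_subset_iff.mpr ⟨h.mem_cutSegment_right, ?_⟩)
  · rw [← h.closedSide_inter]
    exact inter_subset_inter inter_subset_right inter_subset_left
  · rw [cutSegment, inter_comm]
    exact h.symm.mem_cutSegment_right

end Separates

end LocallyConnected

section Chart

variable {e : ℝ → Q} {x a b : Q} {s t : ℝ} {U V : Set Q}

theorem IsCut.image_Ioi_image_Iio_subset [PreconnectedSpace Q] (h : IsCut (e t) U V)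
    (hU : U.Nonempty) (hV : V.Nonempty) (he : IsOpenEmbedding e) :
    (e '' Ioi t ⊆ U ∧ e '' Iio t ⊆ V) ∨ (e '' Ioi t ⊆ V ∧ e '' Iio t ⊆ U) := by
  have not_both : ∀ {U V : Set Q}, IsCut (e t) U V → V.Nonempty →
      e '' Ioi t ⊆ U → ¬ e '' Iio t ⊆ U := by
    intro U V h hV hgt hlt
    have hcompl : Vᶜ = U ∪ range e := by
      refine Subset.antisymm (fun y hy ↦ ?_) (union_subset h.disjoint.subset_compl_right ?_)
      · by_cases hye : y = e t
        · exact Or.inr ⟨t, hye.symm⟩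
        · have : y ∈ U ∪ V := by rwa [h.union_eq]
          exact Or.inl (this.resolve_right hy)
      · rintro _ ⟨s, rfl⟩
        rcases lt_trichotomy s t with hs | rfl | hs
        · exact h.disjoint.notMem_of_mem_left (hlt (mem_image_of_mem e hs))
        · exact fun hsV ↦ h.symm.ne_left hsV rfl
        · exact h.disjoint.notMem_of_mem_left (hgt (mem_image_of_mem e hs))
    have hclopen : IsClopen V :=
      ⟨⟨hcompl ▸ h.isOpen_left.union he.isOpen_range⟩, h.isOpen_right⟩
    exact h.symm.ne_left (hclopen.eq_univ hV ▸ mem_univ (e t)) rfl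
  have half : ∀ {I : Set ℝ}, IsPreconnected I → t ∉ I → e '' I ⊆ U ∨ e '' I ⊆ V :=
    fun hI ht ↦ h.subset_or_subset (hI.image e he.continuous.continuousOn) <| by
      rwa [he.injective.mem_set_image]
  rcases half isPreconnected_Ioi self_notMem_Ioi, half isPreconnected_Iio self_notMem_Iio with
    ⟨hgt | hgt, hlt | hlt⟩
  · exact absurd hlt (not_both h hV hgt)
  · exact Or.inl ⟨hgt, hlt⟩
  · exact Or.inr ⟨hgt, hlt⟩
  · exact absurd hlt (not_both h.symm hU hgt)

theorem IsCut.apply_mem_iff (h : IsCut (e s) U V) (hU : e '' Ioi s ⊆ U) (hV : e '' Iio s ⊆ V)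
    (r : ℝ) : (e r ∈ U ↔ s < r) ∧ (e r ∈ V ↔ r < s) := by
  rcases lt_trichotomy r s with hr | rfl | hr
  · have hrV : e r ∈ V := hV (mem_image_of_mem e hr)
    simp [hrV, hr, hr.le, h.disjoint.notMem_of_mem_right hrV]
  · have hrU : e r ∉ U := fun hrU ↦ h.ne_left hrU rfl
    have hrV : e r ∉ V := fun hrV ↦ h.symm.ne_left hrV rfl
    simp [hrU, hrV]
  · have hrU : e r ∈ U := hU (mem_image_of_mem e hr)
    simp [hrU, hr, hr.le, h.disjoint.notMem_of_mem_left hrU]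

theorem IsCut.shift [T2Space Q] (h : IsCut (e s) U V) (he : IsOpenEmbedding e)
    (hU : e '' Ioi s ⊆ U) (hV : e '' Iio s ⊆ V) (t : ℝ) :
    IsCut (e t) (U \ e '' Icc s t ∪ e '' Ioi t) (V \ e '' Icc t s ∪ e '' Iio t) := by
  have isOpen_side : ∀ {W : Set Q} {r r' : ℝ} {I : Set ℝ}, IsOpen W → IsOpen I →
      IsOpen (W \ e '' Icc r r' ∪ e '' I) := fun hW hI ↦
    (hW.sdiff (isCompact_Icc.image he.continuous).isClosed).union (he.isOpenMap _ hI)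
  have memU := fun r ↦ (h.apply_mem_iff hU hV r).1
  have memV := fun r ↦ (h.apply_mem_iff hU hV r).2
  have mem_image : ∀ (r : ℝ) (I : Set ℝ), e r ∈ e '' I ↔ r ∈ I := fun r I ↦
    he.injective.mem_set_image
  have notMem_image : ∀ {y : Q}, y ∉ range e → ∀ I, y ∉ e '' I := fun hy I hyI ↦
    hy (image_subset_range e I hyI)
  refine ⟨isOpen_side h.isOpen_left isOpen_Ioi, isOpen_side h.isOpen_right isOpen_Iio, ?_, ?_⟩
  · refine disjoint_left.mpr fun y ↦ ?_
    by_cases hy : y ∈ range e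
    · obtain ⟨r, rfl⟩ := hy
      simp only [mem_union, Set.mem_sdiff, memU, memV, mem_image, mem_Icc, mem_Ioi, mem_Iio]
      grind
    · simpa [notMem_image hy] using fun hyU ↦ h.disjoint.notMem_of_mem_left hyU
  · ext y
    by_cases hy : y ∈ range e
    · obtain ⟨r, rfl⟩ := hy
      simp only [mem_union, Set.mem_sdiff, memU, memV, mem_image, mem_Icc, mem_Ioi, mem_Iio,
        mem_compl_iff, mem_singleton_iff, he.injective.eq_iff]
      grind
    · have hys : y ∈ U ∪ V := by rw [h.union_eq]; exact fun hys ↦ hy ⟨s, hys.symm⟩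
      have hyt : y ≠ e t := fun hyt ↦ hy ⟨t, hyt.symm⟩
      simpa [notMem_image hy, hyt] using hys

theorem IsCut.separates_of_mem [T2Space Q] [PreconnectedSpace Q] (h : IsCut (e s) U V)
    (hV : V.Nonempty) (he : IsOpenEmbedding e) (ha : a ∈ U) (hae : a ∉ range e) (ht : e t ∈ U) :
    Separates (e t) a (e s) := by
  have hat : ∀ I, a ∉ e '' I := fun I haI ↦ hae (image_subset_range e I haI)
  have hst : s ≠ t := by rintro rfl; exact h.ne_left ht rfl
  rcases h.image_Ioi_image_Iio_subset ⟨a, ha⟩ hV he with ⟨hgt, hlt⟩ | ⟨hgt, hlt⟩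
  · have hst : s < t := lt_of_not_ge fun hts ↦ h.disjoint.notMem_of_mem_left ht
      (hlt (mem_image_of_mem e (lt_of_le_of_ne hts hst.symm)))
    exact (h.shift he hgt hlt t).separates (Or.inl ⟨ha, hat _⟩) (Or.inr (mem_image_of_mem e hst))
  · have hts : t < s := lt_of_not_ge fun hts ↦ h.disjoint.notMem_of_mem_left ht
      (hgt (mem_image_of_mem e (lt_of_le_of_ne hts hst)))
    exact ((h.symm.shift he hgt hlt t).separates (Or.inr (mem_image_of_mem e hts))
      (Or.inl ⟨ha, hat _⟩)).symm

variable [LocallyConnectedSpace Q]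

theorem Separates.of_chart [T2Space Q] [PreconnectedSpace Q] (h : Separates (e s) a b)
    (he : IsOpenEmbedding e) (ha : a ∉ range e) (hb : b ∉ range e) (t : ℝ) :
    Separates (e t) a b := by
  have off : ∀ {y}, y ∉ range e → ∀ I, y ∉ e '' I := fun hy I hyI ↦
    hy (image_subset_range e I hyI)
  have hcut := isCut_connectedComponentIn h.1
  have haU : a ∈ connectedComponentIn {e s}ᶜ a := mem_connectedComponentIn h.1
  rcases hcut.image_Ioi_image_Iio_subset ⟨a, haU⟩ ⟨b, h.2⟩ he with ⟨hgt, hlt⟩ | ⟨hgt, hlt⟩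
  · exact (hcut.shift he hgt hlt t).separates (Or.inl ⟨haU, off ha _⟩) (Or.inl ⟨h.2, off hb _⟩)
  · exact ((hcut.symm.shift he hgt hlt t).separates (Or.inl ⟨h.2, off hb _⟩)
      (Or.inl ⟨haU, off ha _⟩)).symm

theorem image_Ioi_or_image_Iio_subset_connectedComponentIn [T1Space Q] [PreconnectedSpace Q]
    (he : IsOpenEmbedding e) (ha : a ≠ e t) :
    e '' Ioi t ⊆ connectedComponentIn {e t}ᶜ a ∨ e '' Iio t ⊆ connectedComponentIn {e t}ᶜ a := by
  have hclosure : e t ∈ closure (connectedComponentIn {e t}ᶜ a) := by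
    rw [closure_connectedComponentIn_compl_singleton ha]; exact mem_insert _ _
  obtain ⟨_, ⟨s, rfl⟩, hs⟩ := mem_closure_iff.mp hclosure _ he.isOpen_range (mem_range_self t)
  have hst : s ≠ t := by
    rintro rfl; exact connectedComponentIn_subset _ _ hs rfl
  have half : ∀ {I : Set ℝ}, IsPreconnected I → t ∉ I → s ∈ I →
      e '' I ⊆ connectedComponentIn {e t}ᶜ a := fun hI htI hsI ↦ by
    rw [connectedComponentIn_eq hs]
    exact (hI.image e he.continuous.continuousOn).subset_connectedComponentIn
      (mem_image_of_mem e hsI)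
      (subset_compl_singleton_iff.mpr (by rwa [he.injective.mem_set_image]))
  rcases hst.lt_or_gt with hst | hst
  · exact Or.inr (half isPreconnected_Iio self_notMem_Iio hst)
  · exact Or.inl (half isPreconnected_Ioi self_notMem_Ioi hst)

theorem Separates.compl_singleton_subset [T1Space Q] [PreconnectedSpace Q]
    (h : Separates (e t) a b) (he : IsOpenEmbedding e) :
    {e t}ᶜ ⊆ connectedComponentIn {e t}ᶜ a ∪ connectedComponentIn {e t}ᶜ b := by
  have same : ∀ {y z : Q} {I : Set ℝ}, I.Nonempty → e '' I ⊆ connectedComponentIn {e t}ᶜ y →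
      e '' I ⊆ connectedComponentIn {e t}ᶜ z →
      connectedComponentIn {e t}ᶜ y = connectedComponentIn {e t}ᶜ z := by
    intro y z I hI hIy hIz
    obtain ⟨w, hw⟩ := hI.image e
    rw [connectedComponentIn_eq (hIy hw), connectedComponentIn_eq (hIz hw)]
  have sameGt {y z : Q} := same (y := y) (z := z) (nonempty_Ioi (a := t))
  have sameLt {y z : Q} := same (y := y) (z := z) (nonempty_Iio (a := t))
  have hab : connectedComponentIn {e t}ᶜ a ≠ connectedComponentIn {e t}ᶜ b := fun hab ↦
    h.2.2 (hab ▸ mem_connectedComponentIn h.2.1)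
  intro y hy
  have hyC := mem_connectedComponentIn hy
  have hya := image_Ioi_or_image_Iio_subset_connectedComponentIn he h.1
  have hyb := image_Ioi_or_image_Iio_subset_connectedComponentIn he h.2.1
  have hyy := image_Ioi_or_image_Iio_subset_connectedComponentIn he hy
  grind

end Chart

section OneManifold

variable [PreconnectedSpace Q] [ChartedSpace ℝ Q] {p a b : Q}

theorem Separates.closedSide_union [T1Space Q] (h : Separates p a b) :
    closedSide p a ∪ closedSide p b = univ := by
  have : LocallyConnectedSpace Q := ChartedSpace.locallyConnectedSpace ℝ Q
  obtain ⟨e, he, rfl, -⟩ := exists_isOpenEmbedding_range_subset ℝ (univ_mem (f := 𝓝 p))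
  rw [closedSide_eq_insert h.1, closedSide_eq_insert h.2.1, ← insert_union_distrib,
    eq_univ_iff_forall]
  intro x
  by_cases hx : x = e 0
  exacts [Or.inl hx, Or.inr (h.compl_singleton_subset he hx)]

theorem Separates.cutSegment_union [T1Space Q] (h : Separates p a b) :
    cutSegment a b = cutSegment a p ∪ cutSegment p b := by
  have : LocallyConnectedSpace Q := ChartedSpace.locallyConnectedSpace ℝ Q
  have hleft : closedSide p a ⊆ closedSide b a := h.closedSide_subset.trans subset_closure
  have hright : closedSide p b ⊆ closedSide a b := h.symm.closedSide_subset.trans subset_closure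
  have hcover : cutSegment a b ⊆ closedSide p a ∪ closedSide p b :=
    h.closedSide_union ▸ subset_univ _
  rw [h.cutSegment_right, h.cutSegment_left]
  refine Subset.antisymm (fun x hx ↦ ?_) (union_subset ?_ ?_)
  · exact (hcover hx).imp (fun hxa ↦ ⟨hx.1, hxa⟩) fun hxb ↦ ⟨hxb, hx.2⟩
  · exact inter_subset_inter_right _ hleft
  · exact inter_subset_inter_left _ hright

variable [T2Space Q]

theorem isOpen_setOf_separates : IsOpen {x | Separates x a b} := by
  have : LocallyConnectedSpace Q := ChartedSpace.locallyConnectedSpace ℝ Q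
  refine isOpen_iff_mem_nhds.mpr fun x hx ↦ ?_
  obtain ⟨e, he, rfl, hsub⟩ := exists_isOpenEmbedding_range_subset ℝ
    (inter_mem (compl_singleton_mem_nhds hx.1.symm) (compl_singleton_mem_nhds hx.2.1.symm))
  filter_upwards [he.isOpen_range.mem_nhds (mem_range_self 0)]
  rintro _ ⟨t, rfl⟩
  exact hx.of_chart he (fun ha ↦ (hsub ha).1 rfl) (fun hb ↦ (hsub hb).2 rfl) t

theorem isOpen_setOf_not_separates : IsOpen {x | x ≠ a ∧ x ≠ b ∧ ¬ Separates x a b} := by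
  have : LocallyConnectedSpace Q := ChartedSpace.locallyConnectedSpace ℝ Q
  refine isOpen_iff_mem_nhds.mpr fun x ⟨hxa, hxb, hx⟩ ↦ ?_
  obtain ⟨e, he, rfl, hsub⟩ := exists_isOpenEmbedding_range_subset ℝ
    (inter_mem (compl_singleton_mem_nhds hxa) (compl_singleton_mem_nhds hxb))
  filter_upwards [he.isOpen_range.mem_nhds (mem_range_self 0)]
  rintro _ ⟨t, rfl⟩
  have hmem := hsub (mem_range_self t)
  exact ⟨hmem.1, hmem.2, fun ht ↦
    hx (ht.of_chart he (fun ha ↦ (hsub ha).1 rfl) (fun hb ↦ (hsub hb).2 rfl) 0)⟩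

theorem IsCutPoint.eventually_separates (hb : IsCutPoint b) (hab : a ≠ b) :
    ∀ᶠ x in 𝓝 b, x ∈ connectedComponentIn {b}ᶜ a → Separates x a b := by
  have : LocallyConnectedSpace Q := ChartedSpace.locallyConnectedSpace ℝ Q
  obtain ⟨e, he, rfl, hsub⟩ := exists_isOpenEmbedding_range_subset ℝ
    (compl_singleton_mem_nhds hab.symm)
  obtain ⟨y, hy⟩ := hb.exists_separates hab
  filter_upwards [he.isOpen_range.mem_nhds (mem_range_self 0)]
  rintro _ ⟨t, rfl⟩ ht
  exact (isCut_connectedComponentIn hab).separates_of_mem ⟨y, hy.2⟩ he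
    (mem_connectedComponentIn hab) (fun ha ↦ hsub ha rfl) ht

/- Since `b` is a limit of points separating `a` from `b`, the connected set
`connectedComponentIn {a}ᶜ b` would otherwise be split by whether a point separates `a` from `b`. -/
theorem separates_of_mem_connectedComponentIn (hb : IsCutPoint b) (hab : a ≠ b)
    (hpa : p ∈ connectedComponentIn {a}ᶜ b) (hpb : p ∈ connectedComponentIn {b}ᶜ a) :
    Separates p a b := by
  have : LocallyConnectedSpace Q := ChartedSpace.locallyConnectedSpace ℝ Q
  set U := connectedComponentIn {b}ᶜ a
  have hcut : IsCut b U ({b}ᶜ \ U) := isCut_connectedComponentIn hab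
  set N : Set Q := {x | x ∈ U → Separates x a b}
  set N' : Set Q := U ∩ {x | x ≠ a ∧ x ≠ b ∧ ¬ Separates x a b}
  have hN : IsOpen N := by
    refine isOpen_iff_mem_nhds.mpr fun x hx ↦ ?_
    by_cases hxb : x = b
    · exact hxb ▸ hb.eventually_separates hab
    by_cases hxU : x ∈ U
    · filter_upwards [isOpen_setOf_separates.mem_nhds (hx hxU)] with z hz _ using hz
    · filter_upwards [hcut.isOpen_right.mem_nhds ⟨hxb, hxU⟩] with z hz hzU
      exact absurd hzU hz.2
  have hN' : IsOpen N' := hcut.isOpen_left.inter isOpen_setOf_not_separates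
  have hdisj : Disjoint N N' := disjoint_left.mpr fun x hx hx' ↦ hx'.2.2.2 (hx hx'.1)
  have hcover : connectedComponentIn {a}ᶜ b ⊆ N ∪ N' := fun x hx ↦ by
    have hxa : x ≠ a := connectedComponentIn_subset _ _ hx
    by_cases hxN : x ∈ N
    · exact Or.inl hxN
    · obtain ⟨hxU, hxs⟩ := Classical.not_imp.mp hxN
      exact Or.inr ⟨hxU, hxa, hcut.ne_left hxU, hxs⟩
  have hbN : b ∈ N := fun hbU ↦ absurd rfl (hcut.ne_left hbU)
  exact isPreconnected_connectedComponentIn.subset_left_of_subset_union hN hN' hdisj hcover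
    ⟨b, mem_connectedComponentIn hab.symm, hbN⟩ hpa hpb

theorem separates_of_mem_interior_cutSegment (ha : IsCutPoint a) (hb : IsCutPoint b) (hab : a ≠ b)
    (hp : p ∈ interior (cutSegment a b)) : Separates p a b := by
  have : LocallyConnectedSpace Q := ChartedSpace.locallyConnectedSpace ℝ Q
  rw [cutSegment, interior_inter] at hp
  have hpa : p ≠ a := fun h ↦ ha.notMem_interior_closedSide hab.symm (h ▸ hp.1)
  have hpb : p ≠ b := fun h ↦ hb.notMem_interior_closedSide hab (h ▸ hp.2)
  have hpC := And.intro (interior_subset hp.1) (interior_subset hp.2)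
  rw [closedSide_eq_insert hab.symm, closedSide_eq_insert hab] at hpC
  exact separates_of_mem_connectedComponentIn hb hab (hpC.1.resolve_left hpa)
    (hpC.2.resolve_left hpb)

end OneManifold

end CutPoints

/-! ### Cut points of open quotients of simply connected spaces -/

section Lift

variable {Q : Type*} [TopologicalSpace Q]

theorem continuous_extend_of_tendsto_cocompact [T2Space Q] {Y Z : Type*} [TopologicalSpace Y]
    [TopologicalSpace Z] {e : Y → Q} (he : IsOpenEmbedding e) {g : Y → Z} (hg : Continuous g)
    {c : Z} (hc : Tendsto g (cocompact Y) (𝓝 c)) :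
    Continuous (Function.extend e g fun _ ↦ c) := by
  set f := Function.extend e g fun _ ↦ c
  have hfe : f ∘ e = g := funext fun y ↦ he.injective.extend_apply g (fun _ ↦ c) y
  refine continuous_iff_continuousAt.mpr fun q ↦ ?_
  by_cases hq : q ∈ range e
  · obtain ⟨y, rfl⟩ := hq
    rw [← he.continuousAt_iff, hfe]
    exact hg.continuousAt
  · have hfq : f q = c := Function.extend_apply' g _ q hq
    rw [ContinuousAt, hfq]
    refine tendsto_def.mpr fun N hN ↦ ?_
    obtain ⟨K, hK, hKN⟩ := mem_cocompact.mp (hc hN)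
    have hqK : q ∈ (e '' K)ᶜ := fun hqK ↦ hq (image_subset_range e K hqK)
    filter_upwards [(hK.image he.continuous).isClosed.isOpen_compl.mem_nhds hqK] with q' hq'
    by_cases hq'e : q' ∈ range e
    · obtain ⟨y, rfl⟩ := hq'e
      have hfy : f (e y) = g y := congrFun hfe y
      rw [mem_preimage, hfy]
      exact hKN fun hy ↦ hq' (mem_image_of_mem e hy)
    · have hfq' : f q' = c := Function.extend_apply' g _ q' hq'e
      rw [mem_preimage, hfq']
      exact mem_of_mem_nhds hN

theorem tendsto_coe_arctan_cocompact :
    Tendsto (fun t ↦ (Real.arctan t : AddCircle Real.pi)) (cocompact ℝ)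
      (𝓝 ((Real.pi / 2 : ℝ) : AddCircle Real.pi)) := by
  have hcoe : ∀ s : ℝ, Tendsto ((↑) : ℝ → AddCircle Real.pi) (𝓝 s) (𝓝 s) := fun s ↦
    (AddCircle.continuous_mk' Real.pi).tendsto s
  have hends : ((-(Real.pi / 2) : ℝ) : AddCircle Real.pi) = (Real.pi / 2 : ℝ) := by
    rw [← AddCircle.coe_add_period]; congr 1; ring
  rw [cocompact_eq_atBot_atTop]
  refine Tendsto.sup ?_
    ((hcoe _).comp (Real.tendsto_arctan_atTop.mono_right nhdsWithin_le_nhds))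
  rw [← hends]
  exact (hcoe _).comp (Real.tendsto_arctan_atBot.mono_right nhdsWithin_le_nhds)

theorem eq_arctan_of_coe_eq {s t : ℝ} (hs : |s| < Real.pi / 2)
    (h : (s : AddCircle Real.pi) = Real.arctan t) : s = Real.arctan t := by
  have : Fact (0 < Real.pi) := ⟨Real.pi_pos⟩
  obtain ⟨hs₁, hs₂⟩ := abs_lt.mp hs
  refine (AddCircle.coe_eq_coe_iff_of_mem_Ico (a := -(Real.pi / 2)) ⟨hs₁.le, by linarith⟩
    ⟨(Real.neg_pi_div_two_lt_arctan t).le, ?_⟩).mp h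
  linarith [Real.arctan_lt_pi_div_two t]

theorem exists_continuous_addCircle [T2Space Q] {e : ℝ → Q} (he : IsOpenEmbedding e) :
    ∃ f : Q → AddCircle Real.pi, Continuous f ∧ (∀ t, f (e t) = Real.arctan t) ∧
      ∀ q, f q = 0 → q = e 0 := by
  have harctan : Continuous fun t ↦ (Real.arctan t : AddCircle Real.pi) :=
    (AddCircle.continuous_mk' _).comp Real.continuous_arctan
  have hpi : ((Real.pi / 2 : ℝ) : AddCircle Real.pi) ≠ 0 := by
    have : Fact (0 < Real.pi) := ⟨Real.pi_pos⟩
    have hmem : Real.pi / 2 ∈ Ico 0 Real.pi := ⟨by positivity, by linarith [Real.pi_pos]⟩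
    exact fun h ↦ Real.pi_div_two_pos.ne' ((AddCircle.coe_eq_zero_iff_of_mem_Ico hmem).mp h)
  refine ⟨_, continuous_extend_of_tendsto_cocompact he harctan tendsto_coe_arctan_cocompact,
    fun t ↦ he.injective.extend_apply _ _ t, fun q hq ↦ ?_⟩
  by_cases hqe : q ∈ range e
  · obtain ⟨t, rfl⟩ := hqe
    rw [he.injective.extend_apply] at hq
    have h0 : (0 : ℝ) = Real.arctan t :=
      eq_arctan_of_coe_eq (by simpa using Real.pi_pos) (by simpa using hq.symm)
    rw [Real.arctan_eq_zero_iff.mp h0.symm]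
  · rw [Function.extend_apply' _ _ q hqe] at hq
    exact absurd hq hpi

variable {X : Type*} [TopologicalSpace X] {π : X → Q} {e : ℝ → Q}

theorem exists_lift_of_isOpenEmbedding [SimplyConnectedSpace X] [LocallyPathConnectedSpace X]
    [T2Space Q] (hπ : Continuous π) (hfib : ∀ q, IsPreconnected (π ⁻¹' {q}))
    (he : IsOpenEmbedding e) {x₀ : X} (hx₀ : π x₀ = e 0) :
    ∃ F : C(X, ℝ), (∀ x, F x = 0 ↔ π x = e 0) ∧
      ∀ x t, π x = e t → (F x : AddCircle Real.pi) = Real.arctan t := by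
  obtain ⟨f, hf, hfe, hf₀⟩ := exists_continuous_addCircle he
  obtain ⟨F, ⟨hF₀, hF⟩, -⟩ :=
    (AddCircle.isCoveringMap_coe Real.pi).existsUnique_continuousMap_lifts
      ⟨f ∘ π, hf.comp hπ⟩ x₀ (0 : ℝ) (by simp [hx₀, hfe])
  have hF' : ∀ x, (F x : AddCircle Real.pi) = f (π x) := congrFun hF
  refine ⟨F, fun x ↦ ⟨fun hx ↦ hf₀ _ ?_, fun hx ↦ ?_⟩, fun x t hx ↦ by rw [hF', hx, hfe]⟩
  · rw [← hF', hx]; rfl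
  · have hdiscrete : IsDiscrete (AddSubgroup.zmultiples Real.pi : Set ℝ) :=
      ⟨inferInstanceAs (DiscreteTopology (AddSubgroup.zmultiples Real.pi))⟩
    have hmaps : MapsTo F (π ⁻¹' {e 0}) (AddSubgroup.zmultiples Real.pi) := fun y hy ↦ by
      rw [SetLike.mem_coe, ← QuotientAddGroup.eq_zero_iff]
      rw [mem_preimage, mem_singleton_iff] at hy
      simpa [hy, hfe] using hF' y
    rw [← hF₀]
    exact (hfib (e 0)).constant_of_mapsTo hdiscrete F.continuous.continuousOn hmaps hx hx₀

theorem isCut_image_of_forall_eq_zero_iff (hπ : IsOpenQuotientMap π)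
    (hfib : ∀ q, IsPreconnected (π ⁻¹' {q})) {q : Q} {F : X → ℝ} (hF : Continuous F)
    (hF₀ : ∀ x, F x = 0 ↔ π x = q) :
    IsCut q (π '' {x | 0 < F x}) (π '' {x | F x < 0}) where
  isOpen_left := hπ.isOpenMap _ (isOpen_lt continuous_const hF)
  isOpen_right := hπ.isOpenMap _ (isOpen_lt hF continuous_const)
  disjoint := by
    rw [disjoint_left]
    rintro _ ⟨x, hx, rfl⟩ ⟨y, hy, hxy⟩
    obtain ⟨z, hz, hFz⟩ : (0 : ℝ) ∈ F '' (π ⁻¹' {π x}) :=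
      (hfib (π x)).intermediate_value hxy rfl hF.continuousOn ⟨hy.le, hx.le⟩
    exact hx.ne' ((hF₀ x).mpr (hz.symm.trans ((hF₀ z).mp hFz)))
  union_eq := by
    ext q'
    obtain ⟨x, rfl⟩ := hπ.surjective q'
    constructor
    · rintro (⟨y, hy, hyx⟩ | ⟨y, hy, hyx⟩)
      · exact hyx ▸ fun h ↦ hy.ne' ((hF₀ y).mpr h)
      · exact hyx ▸ fun h ↦ hy.ne ((hF₀ y).mpr h)
    · intro hx
      rcases lt_trichotomy (F x) 0 with hlt | hzero | hgt
      · exact Or.inr (mem_image_of_mem π hlt)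
      · exact absurd ((hF₀ x).mp hzero) hx
      · exact Or.inl (mem_image_of_mem π hgt)

theorem isCutPoint_of_simplyConnectedSpace [SimplyConnectedSpace X] [LocallyPathConnectedSpace X]
    [T2Space Q] (hπ : IsOpenQuotientMap π) (hfib : ∀ q, IsPreconnected (π ⁻¹' {q}))
    (he : IsOpenEmbedding e) : IsCutPoint (e 0) := by
  obtain ⟨x₀, hx₀⟩ := hπ.surjective (e 0)
  obtain ⟨F, hF₀, hF⟩ := exists_lift_of_isOpenEmbedding hπ.continuous hfib he hx₀
  have hcut := isCut_image_of_forall_eq_zero_iff hπ hfib F.continuous hF₀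
  have hlift : ∀ᶠ t in 𝓝 (0 : ℝ), ∃ x, F x = Real.arctan t ∧ π x = e t := by
    have hW : {x | |F x| < Real.pi / 2} ∈ 𝓝 x₀ := by
      refine (isOpen_lt F.continuous.abs continuous_const).mem_nhds ?_
      simpa [(hF₀ x₀).mpr hx₀] using Real.pi_pos
    filter_upwards [he.continuous.continuousAt.preimage_mem_nhds
      (hx₀ ▸ hπ.isOpenMap.image_mem_nhds hW)] with t ⟨x, hx, hxt⟩
    exact ⟨x, eq_arctan_of_coe_eq hx (hF x t hxt), hxt⟩
  obtain ⟨t, ⟨x, hFx, -⟩, ht⟩ := ((hlift.filter_mono nhdsWithin_le_nhds).and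
    (self_mem_nhdsWithin (s := Ioi (0 : ℝ)))).exists
  obtain ⟨s, ⟨y, hFy, -⟩, hs⟩ := ((hlift.filter_mono nhdsWithin_le_nhds).and
    (self_mem_nhdsWithin (s := Iio (0 : ℝ)))).exists
  have hx : 0 < F x := hFx ▸ Real.arctan_pos.mpr ht
  have hy : F y < 0 := hFy ▸ Real.arctan_lt_zero.mpr hs
  exact ⟨_, _, hcut.separates (mem_image_of_mem π hx) (mem_image_of_mem π hy)⟩

end Lift

/-! ### Strips as preimages -/

section Pullback

theorem isPreconnected_preimage_of_isOpenMap {X Q : Type*} [TopologicalSpace X] [TopologicalSpace Q]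
    {π : X → Q} (hπ : IsOpenMap π) (hsurj : Function.Surjective π)
    (hfib : ∀ q, IsPreconnected (π ⁻¹' {q})) {s : Set Q} (hs : IsPreconnected s) :
    IsPreconnected (π ⁻¹' s) := by
  rintro u v hu hv hsub ⟨x, hxs, hxu⟩ ⟨y, hys, hyv⟩
  have hcover : s ⊆ π '' u ∪ π '' v := fun q hq ↦ by
    obtain ⟨z, rfl⟩ := hsurj q
    exact (hsub hq).imp (mem_image_of_mem π) (mem_image_of_mem π)
  obtain ⟨_, hq, ⟨z, hzu, rfl⟩, ⟨w, hwv, hwz⟩⟩ := hs _ _ (hπ u hu) (hπ v hv) hcover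
    ⟨π x, hxs, mem_image_of_mem π hxu⟩ ⟨π y, hys, mem_image_of_mem π hyv⟩
  have hfibre : π ⁻¹' {π z} ⊆ π ⁻¹' s := preimage_mono (singleton_subset_iff.mpr hq)
  exact (hfib (π z) u v hu hv (hfibre.trans hsub) ⟨z, rfl, hzu⟩ ⟨w, hwz, hwv⟩).mono
    (inter_subset_inter_left _ hfibre)

theorem preimage_connectedComponentIn_eq {X Q : Type*} [TopologicalSpace X] [TopologicalSpace Q]
    {π : X → Q} (hπ : IsOpenQuotientMap π) (hfib : ∀ q, IsPreconnected (π ⁻¹' {q})) (s : Set Q)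
    (x : X) :
    π ⁻¹' connectedComponentIn s (π x) = connectedComponentIn (π ⁻¹' s) x := by
  by_cases hx : π x ∈ s
  · refine Subset.antisymm ?_ fun y hy ↦ connectedComponentIn_mono _ (image_preimage_subset π s)
      (hπ.continuous.continuousOn.mapsTo_connectedComponentIn (mem_preimage.mpr hx) hy)
    exact (isPreconnected_preimage_of_isOpenMap hπ.isOpenMap hπ.surjective hfib
      isPreconnected_connectedComponentIn).subset_connectedComponentIn
      (mem_connectedComponentIn hx) (preimage_mono (connectedComponentIn_subset s _))
  · rw [connectedComponentIn_eq_empty hx, connectedComponentIn_eq_empty (F := π ⁻¹' s) hx,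
      preimage_empty]

variable {X : Type} [MetricSpace X] {Q : Type*} [TopologicalSpace Q] {π : X → Q}

theorem halfPlaneOf_preimage_singleton (hπ : IsOpenQuotientMap π)
    (hfib : ∀ q, IsPreconnected (π ⁻¹' {q})) (a b : Q) :
    halfPlaneOf (π ⁻¹' {a}) (π ⁻¹' {b}) = π ⁻¹' closedSide a b := by
  rw [halfPlaneOf, closedSide, hπ.isOpenMap.preimage_closure_eq_closure_preimage hπ.continuous]
  congr 1
  have hcomp : ∀ x ∈ π ⁻¹' {b}, connectedComponentIn (π ⁻¹' {a})ᶜ x =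
      π ⁻¹' connectedComponentIn {a}ᶜ b := by
    rintro x rfl
    rw [preimage_connectedComponentIn_eq hπ hfib, preimage_compl]
  exact (iUnion₂_congr hcomp).trans (biUnion_const (hπ.surjective b) _)

theorem stripBetween_preimage_singleton (hπ : IsOpenQuotientMap π)
    (hfib : ∀ q, IsPreconnected (π ⁻¹' {q})) (a b : Q) :
    stripBetween (π ⁻¹' {a}) (π ⁻¹' {b}) = π ⁻¹' cutSegment a b := by
  simp only [stripBetween, cutSegment, preimage_inter, halfPlaneOf_preimage_singleton hπ hfib]

end Pullback

section Line

theorem isOpen_range_of_continuous_injective {α δ : Type*} [ConditionallyCompleteLinearOrder α]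
    [TopologicalSpace α] [OrderTopology α] [DenselyOrdered α] [NoMinOrder α] [NoMaxOrder α]
    [LinearOrder δ] [TopologicalSpace δ] [OrderClosedTopology δ] {g : α → δ}
    (hg : Continuous g) (hinj : Function.Injective g) : IsOpen (range g) := by
  refine isOpen_iff_mem_nhds.mpr ?_
  rintro _ ⟨t, rfl⟩
  obtain ⟨a, hat⟩ := exists_lt t
  obtain ⟨b, htb⟩ := exists_gt t
  rcases hg.strictMono_of_inj hinj with hmono | hanti
  · filter_upwards [Ioo_mem_nhds (hmono hat) (hmono htb)] with y hy
    exact intermediate_value_univ a b hg (Ioo_subset_Icc_self hy)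
  · filter_upwards [Ioo_mem_nhds (hanti htb) (hanti hat)] with y hy
    exact intermediate_value_univ b a hg (Ioo_subset_Icc_self hy)

theorem isOpen_preimage_range_of_isEmbedding {X : Type*} [TopologicalSpace X]
    {γ p : ℝ → X} (hγ : IsEmbedding γ) (hp : Continuous p) (hinj : Function.Injective p)
    (hsub : range p ⊆ range γ) : IsOpen (γ ⁻¹' range p) := by
  choose g hg using fun t ↦ hsub (mem_range_self t)
  have hcomp : γ ∘ g = p := funext hg
  have hcont : Continuous g := hγ.continuous_iff.mpr (hcomp ▸ hp)
  have hrange : γ ⁻¹' range p = range g := by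
    rw [← hcomp, range_comp, preimage_image_eq _ hγ.injective]
  have hginj : Function.Injective (γ ∘ g) := hcomp ▸ hinj
  rw [hrange]
  exact isOpen_range_of_continuous_injective hcont hginj.of_comp

end Line

/-! ### The leaf space of a foliation by lines -/

section Foliation

variable {X : Type} [MetricSpace X]

theorem IsLine.isometry {γ : ℝ → X} (hγ : IsLine γ) : Isometry γ :=
  Isometry.of_dist_eq fun s t ↦ (hγ s t).trans (Real.dist_eq s t).symm

/-- One of the distances between the three points is the sum of the other two, the metric form of
collinearity; unlike the latter it passes to limits. -/
def IsDegenerateTriangle (u v w : X) : Prop :=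
  dist u v = dist u w + dist v w ∨ dist u w = dist u v + dist v w ∨ dist v w = dist u v + dist u w

theorem isClosed_setOf_isDegenerateTriangle :
    IsClosed {p : X × X × X | IsDegenerateTriangle p.1 p.2.1 p.2.2} := by
  refine .union ?_ (.union ?_ ?_) <;> exact isClosed_eq (by fun_prop) (by fun_prop)

theorem IsLine.isDegenerateTriangle {γ : ℝ → X} (hγ : IsLine γ) (a b c : ℝ) :
    IsDegenerateTriangle (γ a) (γ b) (γ c) := by
  simp only [IsDegenerateTriangle, hγ a b, hγ a c, hγ b c]
  grind

theorem IsLine.mem_range_of_isDegenerateTriangle {γ : ℝ → X} (hγ : IsLine γ) {y : X}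
    (h : ∀ a b, IsDegenerateTriangle (γ a) (γ b) y) : y ∈ range γ := by
  set D := dist (γ 0) y
  have hD : 0 ≤ D := dist_nonneg
  have hdist : ∀ s, |s| = D → dist (γ s) y = 0 ∨ dist (γ s) y = 2 * D := by
    intro s hs
    have h₀ : dist (γ 0) (γ s) = D := by rw [hγ, zero_sub, abs_neg, hs]
    have := h 0 s
    rw [IsDegenerateTriangle, h₀] at this
    grind
  rcases hdist D (abs_of_nonneg hD) with hpos | hpos
  · exact ⟨D, dist_eq_zero.mp hpos⟩
  rcases hdist (-D) (by rw [abs_neg, abs_of_nonneg hD]) with hneg | hneg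
  · exact ⟨-D, dist_eq_zero.mp hneg⟩
  have hends : dist (γ D) (γ (-D)) = 2 * D := by
    rw [hγ, sub_neg_eq_add, ← two_mul, abs_of_nonneg (by positivity)]
  have hzero : D = 0 := by
    have := h D (-D)
    rw [IsDegenerateTriangle, hpos, hneg, hends] at this
    grind
  exact ⟨0, dist_eq_zero.mp hzero⟩

/-- A foliation of `X` by lines, given by the relation of lying on the same leaf: each class is the
image of a line, and the plaques `t ↦ ψ (t, s)` of the charts `ψ` lie in leaves. -/
structure IsLineFoliation (r : Setoid X) : Prop where
  exists_isLine : ∀ x, ∃ γ : ℝ → X, IsLine γ ∧ range γ = {y | r y x}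
  exists_chart : ∀ x, ∃ ψ : ℝ × ℝ → X, IsOpenEmbedding ψ ∧ x ∈ range ψ ∧
    ∀ s t t', r (ψ (t, s)) (ψ (t', s))

/-- A chart meeting each leaf in at most one plaque. -/
structure IsFoliatedBox (r : Setoid X) (ψ : ℝ × ℝ → X) : Prop where
  isOpenEmbedding : IsOpenEmbedding ψ
  rel_iff : ∀ p q, r (ψ p) (ψ q) ↔ p.2 = q.2

variable {r : Setoid X}

theorem IsLine.isOpen_setOf_exists_eq {γ : ℝ → X} (hγ : IsLine γ) {x : X}
    (hrange : range γ = {y | r y x}) {ψ : ℝ × ℝ → X} (hψ : IsOpenEmbedding ψ)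
    (hplaque : ∀ s t t', r (ψ (t, s)) (ψ (t', s))) (s : ℝ) :
    IsOpen {a | ∃ t, ψ (t, s) = γ a} := by
  rcases {a | ∃ t, ψ (t, s) = γ a}.eq_empty_or_nonempty with hempty | ⟨a, t, ht⟩
  · exact hempty ▸ isOpen_empty
  · refine isOpen_preimage_range_of_isEmbedding hγ.isometry.isEmbedding (p := fun t ↦ ψ (t, s))
      (hψ.continuous.comp (.prodMk_left s)) (fun t t' h ↦ by simpa using hψ.injective h) ?_
    rintro _ ⟨t', rfl⟩
    have ha : r (γ a) x := hrange.subset (mem_range_self a)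
    rw [hrange]
    exact r.trans (hplaque s t' t) (ht ▸ ha)

/- The plaques cut the parameter interval into disjoint open sets. -/
theorem IsLine.snd_eq_of_image_subset_range {γ : ℝ → X} (hγ : IsLine γ) {x : X}
    (hrange : range γ = {y | r y x}) {ψ : ℝ × ℝ → X} (hψ : IsOpenEmbedding ψ)
    (hplaque : ∀ s t t', r (ψ (t, s)) (ψ (t', s))) {J : Set ℝ} (hJ : IsPreconnected J)
    (hsub : γ '' J ⊆ range ψ) {p q : ℝ × ℝ} (hp : ψ p ∈ γ '' J) (hq : ψ q ∈ γ '' J) :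
    p.2 = q.2 := by
  set T : ℝ → Set ℝ := fun s ↦ {a | ∃ t, ψ (t, s) = γ a}
  have hT : ∀ s, IsOpen (T s) := hγ.isOpen_setOf_exists_eq hrange hψ hplaque
  obtain ⟨a, ha, hap⟩ := hp
  obtain ⟨b, hb, hbq⟩ := hq
  have hcover : J ⊆ T p.2 ∪ ⋃ s ∈ ({p.2}ᶜ : Set ℝ), T s := by
    intro c hc
    obtain ⟨⟨t, s⟩, hts⟩ := hsub (mem_image_of_mem γ hc)
    by_cases hs : s = p.2
    · exact Or.inl ⟨t, hs ▸ hts⟩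
    · exact Or.inr (mem_biUnion hs ⟨t, hts⟩)
  have hdisj : Disjoint (T p.2) (⋃ s ∈ ({p.2}ᶜ : Set ℝ), T s) := by
    refine disjoint_left.mpr ?_
    rintro c ⟨t, ht⟩ hc
    obtain ⟨s, hs, t', ht'⟩ := mem_iUnion₂.mp hc
    exact hs (Prod.ext_iff.mp (hψ.injective (ht'.trans ht.symm))).2
  obtain ⟨t, ht⟩ := hJ.subset_left_of_subset_union (hT _) (isOpen_biUnion fun s _ ↦ hT s) hdisj
    hcover ⟨a, ha, p.1, hap.symm⟩ hb
  have heq : (t, p.2) = q := hψ.injective (ht.trans hbq)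
  exact (Prod.ext_iff.mp heq).2

theorem IsLine.image_uIcc_subset_ball {γ : ℝ → X} (hγ : IsLine γ) {x : X} {ρ a b : ℝ}
    (ha : dist (γ a) x < ρ / 3) (hb : dist (γ b) x < ρ / 3) : γ '' uIcc a b ⊆ ball x ρ := by
  rintro _ ⟨c, hc, rfl⟩
  have hca : dist (γ c) (γ a) ≤ dist (γ a) (γ b) := by
    rw [hγ, hγ, abs_sub_comm a b]
    exact abs_sub_left_of_mem_uIcc hc
  rw [mem_ball]
  linarith [dist_triangle (γ c) (γ a) x, dist_triangle_right (γ a) (γ b) x]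

theorem IsFoliatedBox.mem_interior_preimage {ψ : ℝ × ℝ → X} (hψ : IsFoliatedBox r ψ)
    {s : Set (Quotient r)} {p q : ℝ × ℝ} (hpq : q.2 = p.2)
    (hp : ψ p ∈ interior (Quotient.mk r ⁻¹' s)) : ψ q ∈ interior (Quotient.mk r ⁻¹' s) := by
  set J : Set ℝ := {s' | ψ (p.1, s') ∈ interior (Quotient.mk r ⁻¹' s)}
  have hJ : IsOpen J := isOpen_interior.preimage
    (hψ.isOpenEmbedding.continuous.comp (.prodMk_right p.1))
  refine interior_maximal ?_ (hψ.isOpenEmbedding.isOpenMap _ (hJ.preimage continuous_snd))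
    (mem_image_of_mem ψ (hpq ▸ hp : q.2 ∈ J))
  rintro _ ⟨p', hp', rfl⟩
  have hmk : Quotient.mk r (ψ p') = Quotient.mk r (ψ (p.1, p'.2)) :=
    Quotient.sound ((hψ.rel_iff _ _).mpr rfl)
  rw [mem_preimage, hmk]
  exact interior_subset (s := Quotient.mk r ⁻¹' s) hp'

namespace IsLineFoliation

theorem isPreconnected_fiber (hr : IsLineFoliation r) (q : Quotient r) :
    IsPreconnected (Quotient.mk r ⁻¹' {q}) := by
  obtain ⟨x, rfl⟩ := Quotient.exists_rep q
  obtain ⟨γ, hγ, hrange⟩ := hr.exists_isLine x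
  have hfibre : Quotient.mk r ⁻¹' {Quotient.mk r x} = range γ := by
    rw [hrange]; ext y; exact Quotient.eq
  rw [hfibre]
  exact isPreconnected_range hγ.isometry.continuous

theorem exists_isFoliatedBox (hr : IsLineFoliation r) (x : X) :
    ∃ ψ, IsFoliatedBox r ψ ∧ ψ 0 = x := by
  obtain ⟨ψ, hψ, ⟨⟨t₀, s₀⟩, rfl⟩, hplaque⟩ := hr.exists_chart x
  set x := ψ (t₀, s₀)
  obtain ⟨ρ, hρ, hball⟩ := Metric.mem_nhds_iff.mp
    (hψ.isOpen_range.mem_nhds (mem_range_self (t₀, s₀)))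
  obtain ⟨δ, hδ, hsmall⟩ := Metric.mem_nhds_iff.mp
    (hψ.continuous.continuousAt.preimage_mem_nhds (ball_mem_nhds x (by positivity : 0 < ρ / 3)))
  obtain ⟨u, hu, hu₀, hurange⟩ := exists_isOpenEmbedding_range_eq_ball t₀ hδ
  obtain ⟨v, hv, hv₀, hvrange⟩ := exists_isOpenEmbedding_range_eq_ball s₀ hδ
  have hnear : ∀ p : ℝ × ℝ, dist (ψ (Prod.map u v p)) x < ρ / 3 := fun p ↦ hsmall <| by
    rw [← ball_prod_same, ← hurange, ← hvrange]
    exact ⟨mem_range_self _, mem_range_self _⟩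
  refine ⟨ψ ∘ Prod.map u v, ⟨hψ.comp (hu.prodMap hv), fun p q ↦ ⟨fun hpq ↦ ?_, fun hpq ↦ ?_⟩⟩,
    congrArg ψ (Prod.ext hu₀ hv₀)⟩
  · obtain ⟨γ, hγ, hrange⟩ := hr.exists_isLine (ψ (Prod.map u v q))
    obtain ⟨a, ha⟩ : ψ (Prod.map u v p) ∈ range γ := hrange ▸ hpq
    obtain ⟨b, hb⟩ : ψ (Prod.map u v q) ∈ range γ := hrange ▸ r.refl _
    have hsub : γ '' uIcc a b ⊆ range ψ :=
      (hγ.image_uIcc_subset_ball (ha ▸ hnear p) (hb ▸ hnear q)).trans hball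
    exact hv.injective (hγ.snd_eq_of_image_subset_range hrange hψ hplaque isPreconnected_uIcc
      hsub ⟨a, left_mem_uIcc, ha⟩ ⟨b, right_mem_uIcc, hb⟩)
  · simpa [Prod.map, hpq] using hplaque (v q.2) (u p.1) (u q.1)

theorem isDegenerateTriangle (hr : IsLineFoliation r) {x u v w : X} (hu : r u x) (hv : r v x)
    (hw : r w x) : IsDegenerateTriangle u v w := by
  obtain ⟨γ, hγ, hrange⟩ := hr.exists_isLine x
  obtain ⟨a, rfl⟩ : u ∈ range γ := hrange ▸ hu
  obtain ⟨b, rfl⟩ : v ∈ range γ := hrange ▸ hv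
  obtain ⟨c, rfl⟩ : w ∈ range γ := hrange ▸ hw
  exact hγ.isDegenerateTriangle a b c

theorem mem_interior_preimage (hr : IsLineFoliation r) {s : Set (Quotient r)} {x y : X}
    (hxy : r y x) (hx : x ∈ interior (Quotient.mk r ⁻¹' s)) :
    y ∈ interior (Quotient.mk r ⁻¹' s) := by
  obtain ⟨γ, hγ, hrange⟩ := hr.exists_isLine x
  set W := interior (Quotient.mk r ⁻¹' s)
  have hrel : ∀ a b, r (γ a) (γ b) := fun a b ↦
    r.trans (hrange.subset (mem_range_self a)) (r.symm (hrange.subset (mem_range_self b)))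
  obtain ⟨a, rfl⟩ : x ∈ range γ := hrange ▸ r.refl x
  obtain ⟨b, rfl⟩ : y ∈ range γ := hrange ▸ hxy
  have hopen : IsOpen (γ ⁻¹' W) := isOpen_interior.preimage hγ.isometry.continuous
  have hclosed : IsClosed (γ ⁻¹' W) := by
    refine isClosed_iff_frequently.mpr fun c hc ↦ ?_
    obtain ⟨ψ, hψ, hψ₀⟩ := hr.exists_isFoliatedBox (γ c)
    have hnear : ∀ᶠ d in 𝓝 c, γ d ∈ range ψ := hγ.isometry.continuous.continuousAt
      (hψ.isOpenEmbedding.isOpen_range.mem_nhds ⟨0, hψ₀⟩)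
    obtain ⟨d, hd, p, hp⟩ := (hc.and_eventually hnear).exists
    rw [mem_preimage, ← hψ₀]
    refine hψ.mem_interior_preimage ((hψ.rel_iff p 0).mp ?_).symm (hp ▸ hd)
    rw [hp, hψ₀]
    exact hrel d c
  exact (IsClopen.eq_univ ⟨hclosed, hopen⟩ ⟨a, hx⟩ ▸ mem_univ b : b ∈ γ ⁻¹' W)

theorem isOpenQuotientMap_mk (hr : IsLineFoliation r) : IsOpenQuotientMap (Quotient.mk r) := by
  refine ⟨Quotient.mk_surjective, continuous_quotient_mk', fun V hV ↦ ?_⟩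
  rw [← isQuotientMap_quotient_mk'.isOpen_preimage]
  refine isOpen_iff_mem_nhds.mpr fun x ⟨y, hy, hyx⟩ ↦ mem_interior_iff_mem_nhds.mp ?_
  exact hr.mem_interior_preimage (r.symm (Quotient.exact hyx))
    (interior_maximal (subset_preimage_image _ V) hV hy)

theorem isClosed_setOf_rel (hr : IsLineFoliation r) : IsClosed {p : X × X | r p.1 p.2} := by
  refine isClosed_iff_frequently.mpr fun ⟨x, y⟩ hxy ↦ ?_
  obtain ⟨γ, hγ, hrange⟩ := hr.exists_isLine x
  have hx : ∀ a, Quotient.mk r (γ a) = Quotient.mk r x := fun a ↦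
    Quotient.sound (hrange.subset (mem_range_self a))
  have hlift : ∀ a, ∀ U ∈ 𝓝 (γ a), ∀ᶠ x' in 𝓝 x, ∃ u ∈ U, r u x' := fun a U hU ↦ by
    have hmem := hr.isOpenQuotientMap_mk.isOpenMap.image_mem_nhds hU
    rw [hx] at hmem
    filter_upwards [hr.isOpenQuotientMap_mk.continuous.continuousAt.preimage_mem_nhds hmem]
      with x' ⟨u, hu, hux'⟩ using ⟨u, hu, Quotient.exact hux'⟩
  suffices hdeg : ∀ a b, IsDegenerateTriangle (γ a) (γ b) y from
    r.symm (hrange.subset (hγ.mem_range_of_isDegenerateTriangle hdeg))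
  intro a b
  refine isClosed_iff_frequently.mp isClosed_setOf_isDegenerateTriangle (γ a, γ b, y) ?_
  refine frequently_iff.mpr fun {N} hN ↦ ?_
  rw [nhds_prod_eq, nhds_prod_eq] at hN
  obtain ⟨U, hU, N', hN', hUN⟩ := Filter.mem_prod_iff.mp hN
  obtain ⟨V, hV, Y, hY, hVY⟩ := Filter.mem_prod_iff.mp hN'
  obtain ⟨⟨x', y'⟩, hx'y', ⟨⟨u, hu, hux'⟩, v, hv, hvx'⟩, hy'⟩ := (hxy.and_eventually
    (((hlift a U hU).and (hlift b V hV)).prod_nhds hY)).exists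
  refine ⟨(u, v, y'), hUN ⟨hu, hVY ⟨hv, hy'⟩⟩, ?_⟩
  exact hr.isDegenerateTriangle hux' hvx' (r.symm hx'y')

theorem t2Space_quotient (hr : IsLineFoliation r) : T2Space (Quotient r) := by
  simpa only [t2Space_iff_of_isOpenQuotientMap hr.isOpenQuotientMap_mk, Quotient.eq]
    using hr.isClosed_setOf_rel

theorem exists_isOpenEmbedding_quotient (hr : IsLineFoliation r) (q : Quotient r) :
    ∃ e : ℝ → Quotient r, IsOpenEmbedding e ∧ e 0 = q := by
  obtain ⟨x, rfl⟩ := Quotient.exists_rep q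
  obtain ⟨ψ, hψ, rfl⟩ := hr.exists_isFoliatedBox x
  have hmk : ∀ p, Quotient.mk r (ψ (0, p.2)) = Quotient.mk r (ψ p) := fun p ↦
    Quotient.sound ((hψ.rel_iff _ _).mpr rfl)
  refine ⟨fun s ↦ Quotient.mk r (ψ (0, s)), .of_continuous_injective_isOpenMap ?_ ?_ ?_, rfl⟩
  · exact hr.isOpenQuotientMap_mk.continuous.comp
      (hψ.isOpenEmbedding.continuous.comp (.prodMk_right 0))
  · exact fun s s' h ↦ (hψ.rel_iff _ _).mp (Quotient.exact h)
  · intro J hJ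
    have himage : (fun s ↦ Quotient.mk r (ψ (0, s))) '' J =
        Quotient.mk r '' (ψ '' (Prod.snd ⁻¹' J)) := by
      conv_lhs => rw [← image_preimage_eq J (Prod.snd_surjective (α := ℝ)), ← image_comp]
      rw [← image_comp]
      exact image_congr fun p _ ↦ hmk p
    rw [himage]
    exact hr.isOpenQuotientMap_mk.isOpenMap _
      (hψ.isOpenEmbedding.isOpenMap _ (hJ.preimage continuous_snd))

theorem locallyPathConnectedSpace (hr : IsLineFoliation r) : LocallyPathConnectedSpace X :=
  have := chartedSpaceOfIsOpenEmbedding fun x ↦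
    (hr.exists_chart x).imp fun _ hψ ↦ And.intro hψ.1 hψ.2.1
  ChartedSpace.locallyPathConnectedSpace (ℝ × ℝ) X

theorem isCutPoint [SimplyConnectedSpace X] (hr : IsLineFoliation r) (q : Quotient r) :
    IsCutPoint q := by
  have := hr.locallyPathConnectedSpace
  have := hr.t2Space_quotient
  obtain ⟨e, he, rfl⟩ := hr.exists_isOpenEmbedding_quotient q
  exact isCutPoint_of_simplyConnectedSpace hr.isOpenQuotientMap_mk hr.isPreconnected_fiber he

end IsLineFoliation

theorem leaf_separates_strip_general [SimplyConnectedSpace X] (hr : IsLineFoliation r)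
    {σ₁ σ₂ σ₃ : Set X} (h₁ : σ₁ ∈ r.classes) (h₂ : σ₂ ∈ r.classes) (h₃ : σ₃ ∈ r.classes)
    (h₁₃ : σ₁ ≠ σ₃) {p : X} (hp : p ∈ interior (stripBetween σ₁ σ₃)) (hp₂ : p ∈ σ₂) :
    stripBetween σ₁ σ₂ ∩ stripBetween σ₂ σ₃ = σ₂ ∧
      stripBetween σ₁ σ₃ = stripBetween σ₁ σ₂ ∪ stripBetween σ₂ σ₃ := by
  have hfibre : ∀ σ ∈ r.classes, ∃ q, Quotient.mk r ⁻¹' {q} = σ := by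
    rintro _ ⟨x, rfl⟩
    exact ⟨Quotient.mk r x, ext fun y ↦ Quotient.eq⟩
  obtain ⟨a, rfl⟩ := hfibre σ₁ h₁
  obtain ⟨b, rfl⟩ := hfibre σ₂ h₂
  obtain ⟨c, rfl⟩ := hfibre σ₃ h₃
  have hπ := hr.isOpenQuotientMap_mk
  have := hr.t2Space_quotient
  let := chartedSpaceOfIsOpenEmbedding fun q ↦
    (hr.exists_isOpenEmbedding_quotient q).imp fun _ he ↦ And.intro he.1 ⟨0, he.2⟩
  have := ChartedSpace.locallyConnectedSpace ℝ (Quotient r)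
  simp only [stripBetween_preimage_singleton hπ hr.isPreconnected_fiber,
    ← hπ.isOpenMap.preimage_interior_eq_interior_preimage hπ.continuous] at hp ⊢
  obtain rfl : Quotient.mk r p = b := hp₂
  have hb : Separates (Quotient.mk r p) a c := separates_of_mem_interior_cutSegment
    (hr.isCutPoint a) (hr.isCutPoint c) (fun hac ↦ h₁₃ (hac ▸ rfl)) hp
  rw [← preimage_inter, ← preimage_union, hb.cutSegment_inter, ← hb.cutSegment_union]
  exact ⟨rfl, rfl⟩

end Foliation

namespace GeodesicLineFoliation

variable {S : RiemannianSurface} (F : GeodesicLineFoliation S)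

theorem isPartition_leaves : Setoid.IsPartition F.leaves := by
  refine ⟨fun hempty ↦ ?_, fun x ↦ ?_⟩
  · obtain ⟨γ, -, -, hγ⟩ := F.leaf_is_geodesic_line ∅ hempty
    exact (range_nonempty γ).ne_empty hγ
  · obtain ⟨L, hL, hxL⟩ := F.covers x
    exact ⟨L, ⟨hL, hxL⟩, fun L' ⟨hL', hxL'⟩ ↦ F.eq_of_inter L' hL' L hL ⟨x, hxL', hxL⟩⟩

/-- The relation of lying on the same leaf. -/
def leafSetoid : Setoid S.M :=
  Setoid.mkClasses F.leaves F.isPartition_leaves.2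

theorem classes_leafSetoid : F.leafSetoid.classes = F.leaves :=
  Setoid.classes_mkClasses F.leaves F.isPartition_leaves

theorem isLineFoliation_leafSetoid : IsLineFoliation F.leafSetoid where
  exists_isLine x := by
    have hx : {y | F.leafSetoid y x} ∈ F.leaves := F.classes_leafSetoid ▸ F.leafSetoid.mem_classes x
    obtain ⟨γ, hγ, -, hrange⟩ := F.leaf_is_geodesic_line _ hx
    exact ⟨γ, hγ, hrange⟩
  exists_chart x := by
    obtain ⟨U, hU, hxU, φ, hφ⟩ := F.locally_trivial x
    refine ⟨Subtype.val ∘ φ.symm, hU.isOpenEmbedding_subtypeVal.comp φ.symm.isOpenEmbedding,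
      ⟨φ ⟨x, hxU⟩, by simp⟩, fun s t t' ↦ ?_⟩
    obtain ⟨L, hL, hplaque⟩ := hφ s
    exact F.leafSetoid.rel_iff_exists_classes.mpr
      ⟨L, F.classes_leafSetoid ▸ hL, hplaque t, hplaque t'⟩

end GeodesicLineFoliation

/-- betweenness lemma. Let `F` be a geodesic line foliation of a
complete Riemannian plane `M`. Let `σ₁` and `σ₃` be two (distinct) leaves of `F`, let
`p` be an interior point of the strip `S_{σ₁}^{σ₃}`, and let `σ₂` be the leaf of `F`
passing through `p`. Then `σ₂` separates the strip:
`S_{σ₁}^{σ₂} ∩ S_{σ₂}^{σ₃} = σ₂` and `S_{σ₁}^{σ₃} = S_{σ₁}^{σ₂} ∪ S_{σ₂}^{σ₃}`. -/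
theorem leaf_separates_strip
    (S : RiemannianSurface)
    (hplane : Nonempty (S.M ≃ₜ (ℝ × ℝ)))
    (F : GeodesicLineFoliation S)
    (σ₁ σ₂ σ₃ : Set S.M)
    (h₁ : σ₁ ∈ F.leaves) (h₃ : σ₃ ∈ F.leaves) (h₁₃ : σ₁ ≠ σ₃)
    (p : S.M) (hp : p ∈ interior (stripBetween σ₁ σ₃))
    (h₂ : σ₂ ∈ F.leaves) (hp₂ : p ∈ σ₂) :
    stripBetween σ₁ σ₂ ∩ stripBetween σ₂ σ₃ = σ₂ ∧
    stripBetween σ₁ σ₃ = stripBetween σ₁ σ₂ ∪ stripBetween σ₂ σ₃ := by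
  obtain ⟨e⟩ := hplane
  have := e.toHomotopyEquiv.simplyConnectedSpace
  simp only [← F.classes_leafSetoid] at h₁ h₂ h₃
  exact leaf_separates_strip_general F.isLineFoliation_leafSetoid h₁ h₂ h₃ h₁₃ hp hp₂
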